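/- Let K > 0 and μ > 0. Define S(C) = (K/2)(ln det C)·C⁻¹ − (μ/3)(det C)^{-1/3}(tr C)·C⁻¹ + μ(det C)^{-1/3}·I on real 3×3 matrices with positive determinant. Then for every real symmetric positive-definite 3×3 matrix C and every real symmetric 3×3 matrix H, the Fréchet derivative of S at C applied to H equals (1/2)·[ K·tr(C⁻¹H)·C⁻¹ − K·(ln det C)·C⁻¹HC⁻¹ + (2μ/3)(det C)^{-1/3}·( −tr(H)·C⁻¹ − tr(C⁻¹H)·I + (1/3)·tr(C)·tr(C⁻¹H)·C⁻¹ + tr(C)·C⁻¹HC⁻¹ ) ]. (This is the contraction (1/2)𝔻 : H of the material tangent 𝔻 = K C⁻¹⊗C⁻¹ − 2K ln J · 𝓘 + (2μ/3)J^{-2/3}(−I⊗C⁻¹ − C⁻¹⊗I + (1/3)tr(C) C⁻¹⊗C⁻¹ + tr(C) 𝓘) with J = √(det C) and 𝓘 : H = C⁻¹HC⁻¹ for symmetric H.) -/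

import Mathlib

attribute [local instance] Matrix.normedAddCommGroup Matrix.normedSpace

/-
The stress is assembled from `C⁻¹`, `tr C`, `log det C` and `(det C)ᵖ`. Jacobi's formula
`D(det)(C) H = tr (adj C · H)`, which is the row-multilinearity of the determinant, gives
`D(log det)(C) H = tr (C⁻¹ H)` and `D(detᵖ)(C) H = p (det C)ᵖ tr (C⁻¹ H)` at invertible `C`, and
`D(inv)(C) H = -C⁻¹ H C⁻¹`. The product rule then produces the terms of the tangent one by one.
-/

section MatrixCalculus

variable {n 𝕜 : Type*} [Fintype n] [NontriviallyNormedField 𝕜]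

/-- The linear functional `H ↦ tr (B H)`, through which `tr` and `det` are differentiated. -/
def traceMul (B : Matrix n n 𝕜) : Matrix n n 𝕜 →L[𝕜] 𝕜 where
  toLinearMap := Matrix.traceLinearMap n 𝕜 𝕜 ∘ₗ LinearMap.mulLeft 𝕜 B
  cont := (continuous_const.matrix_mul continuous_id).matrix_trace

@[simp]
theorem traceMul_apply (B H : Matrix n n 𝕜) : traceMul B H = (B * H).trace :=
  rfl

theorem traceMul_smul (c : 𝕜) (B : Matrix n n 𝕜) : traceMul (c • B) = c • traceMul B := by
  ext1 H
  simp only [traceMul_apply, Matrix.smul_mul, Matrix.trace_smul, smul_apply]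

/-- The dyadic product `A ⊗ B` of second-order tensors, as the linear map `H ↦ tr (B H) A`; for
symmetric `B` this is the double contraction `(A ⊗ B) : H`. -/
def dyad (A B : Matrix n n 𝕜) : Matrix n n 𝕜 →L[𝕜] Matrix n n 𝕜 :=
  (traceMul B).smulRight A

@[simp]
theorem dyad_apply (A B H : Matrix n n 𝕜) : dyad A B H = (B * H).trace • A :=
  rfl

/-- The linear map `H ↦ A H A`; at `A = C⁻¹` it is the fourth-order tensor `𝓘`. -/
def sandwich (A : Matrix n n 𝕜) : Matrix n n 𝕜 →L[𝕜] Matrix n n 𝕜 where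
  toLinearMap := LinearMap.mulRight 𝕜 A ∘ₗ LinearMap.mulLeft 𝕜 A
  cont := (continuous_const.matrix_mul continuous_id).matrix_mul continuous_const

@[simp]
theorem sandwich_apply (A H : Matrix n n 𝕜) : sandwich A H = A * H * A :=
  rfl

variable [DecidableEq n]

theorem hasFDerivAt_trace (C : Matrix n n 𝕜) :
    HasFDerivAt (fun X : Matrix n n 𝕜 => X.trace) (traceMul 1) C :=
  (traceMul (1 : Matrix n n 𝕜)).hasFDerivAt.congr_of_eventuallyEq
    (.of_forall fun X => by rw [traceMul_apply, one_mul])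

theorem sum_det_updateRow {R : Type*} [CommRing R] (C H : Matrix n n R) :
    ∑ i, (C.updateRow i (H i)).det = (C.adjugate * H).trace := by
  rw [Matrix.trace_mul_comm]
  refine Finset.sum_congr rfl fun i _ => ?_
  rw [← Matrix.cramer_transpose_apply, Matrix.cramer_eq_adjugate_mulVec,
    ← Matrix.adjugate_transpose, Matrix.mulVec_transpose]
  rfl

theorem hasFDerivAt_det (C : Matrix n n 𝕜) :
    HasFDerivAt (fun X : Matrix n n 𝕜 => X.det) (traceMul C.adjugate) C := by
  let detRows : ContinuousMultilinearMap 𝕜 (fun _ : n => n → 𝕜) 𝕜 :=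
    { (Matrix.detRowAlternating (n := n) (R := 𝕜)).toMultilinearMap with
      cont := Continuous.matrix_det continuous_id }
  have linearDeriv_eq : detRows.linearDeriv C = traceMul C.adjugate := by
    ext1 H
    exact (detRows.linearDeriv_apply C H).trans (sum_det_updateRow C H)
  exact linearDeriv_eq ▸ detRows.hasFDerivAt C

theorem traceMul_adjugate {C : Matrix n n 𝕜} (hC : C.det ≠ 0) :
    traceMul C.adjugate = C.det • traceMul C⁻¹ := by
  rw [← traceMul_smul, Matrix.inv_def, Ring.inverse_eq_inv', smul_inv_smul₀ hC]

theorem hasFDerivAt_matrix_inv [CompleteSpace 𝕜] {C : Matrix n n 𝕜} (hC : C.det ≠ 0) :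
    HasFDerivAt (fun X : Matrix n n 𝕜 => X⁻¹) (-sandwich C⁻¹) C := by
  obtain ⟨u, rfl⟩ := (Matrix.isUnit_iff_isUnit_det C).2 hC.isUnit
  -- The `ℓ∞` operator norm is submultiplicative and induces the entrywise topology.
  let normedRing : NormedRing (Matrix n n 𝕜) := Matrix.linftyOpNormedRing
  let normedAlgebra : NormedAlgebra 𝕜 (Matrix n n 𝕜) := Matrix.linftyOpNormedAlgebra
  have : HasSummableGeomSeries (Matrix n n 𝕜) :=
    @instHasSummableGeomSeriesOfCompleteSpace _ _ (inferInstanceAs (CompleteSpace (n → n → 𝕜)))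
  rw [← Matrix.coe_units_inv, funext Matrix.nonsing_inv_eq_ringInverse]
  exact hasFDerivAt_ringInverse (𝕜 := 𝕜) u

end MatrixCalculus

section NeoHookean

variable {n : Type*} [Fintype n] [DecidableEq n] {C : Matrix n n ℝ}

theorem hasFDerivAt_log_det (hC : C.det ≠ 0) :
    HasFDerivAt (fun X : Matrix n n ℝ => Real.log X.det) (traceMul C⁻¹) C := by
  have h : HasFDerivAt (fun X : Matrix n n ℝ => Real.log X.det)
      (C.det⁻¹ • traceMul C.adjugate) C := (hasFDerivAt_det C).log hC
  rwa [traceMul_adjugate hC, inv_smul_smul₀ hC] at h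

theorem hasFDerivAt_det_rpow (p : ℝ) (hC : C.det ≠ 0) :
    HasFDerivAt (fun X : Matrix n n ℝ => X.det ^ p) ((p * C.det ^ p) • traceMul C⁻¹) C := by
  have h : HasFDerivAt (fun X : Matrix n n ℝ => X.det ^ p)
      ((p * C.det ^ (p - 1)) • traceMul C.adjugate) C :=
    (hasFDerivAt_det C).rpow_const (Or.inl hC)
  rwa [traceMul_adjugate hC, smul_smul, mul_assoc, ← Real.rpow_add_one hC, sub_add_cancel] at h

/-- The second Piola–Kirchhoff stress `S = 2 ∂Ψ/∂C` of the compressible neo-Hookean energy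
`Ψ = (K / 2) (ln J)² + (μ / 2) (J⁻²ᵃ tr C - 3)` with `J² = det C`. In dimension `d` the exponent is
`a = 1 / d`, which makes `J⁻²ᵃ tr C` invariant under scaling of `C`. -/
noncomputable def neoHookeanStress (K μ a : ℝ) (C : Matrix n n ℝ) : Matrix n n ℝ :=
  (K / 2 * Real.log C.det) • C⁻¹ - (μ * a * C.det ^ (-a) * C.trace) • C⁻¹
    + (μ * C.det ^ (-a)) • (1 : Matrix n n ℝ)

/-- The volumetric part `K (ln J) C⁻¹` of `neoHookeanStress`, with `ln J = (ln det C) / 2`. -/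
noncomputable def volumetricStress (K : ℝ) (C : Matrix n n ℝ) : Matrix n n ℝ :=
  (K / 2 * Real.log C.det) • C⁻¹

/-- The isochoric part of `neoHookeanStress`, derived from the energy `(μ / 2) (det C)⁻ᵃ tr C`. -/
noncomputable def isochoricStress (μ a : ℝ) (C : Matrix n n ℝ) : Matrix n n ℝ :=
  (μ * C.det ^ (-a)) • (1 - (a * C.trace) • C⁻¹)

theorem neoHookeanStress_eq_add (K μ a : ℝ) (C : Matrix n n ℝ) :
    neoHookeanStress K μ a C = volumetricStress K C + isochoricStress μ a C := by
  simp only [neoHookeanStress, volumetricStress, isochoricStress]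
  module

/-- The volumetric part `K C⁻¹ ⊗ C⁻¹ - 2 K (ln J) 𝓘` of the material tangent, with
`2 ln J = ln det C`. -/
noncomputable def volumetricTangent (K : ℝ) (C : Matrix n n ℝ) :
    Matrix n n ℝ →L[ℝ] Matrix n n ℝ :=
  K • dyad C⁻¹ C⁻¹ - (K * Real.log C.det) • sandwich C⁻¹

/-- The isochoric part of the material tangent, with `J⁻²ᵃ` written as `(det C)⁻ᵃ`. -/
noncomputable def isochoricTangent (μ a : ℝ) (C : Matrix n n ℝ) :
    Matrix n n ℝ →L[ℝ] Matrix n n ℝ :=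
  (2 * μ * a * C.det ^ (-a)) •
    (-dyad C⁻¹ 1 - dyad 1 C⁻¹ + (a * C.trace) • dyad C⁻¹ C⁻¹ + C.trace • sandwich C⁻¹)

/-- The material tangent `𝔻 = 2 ∂S/∂C` of `S = neoHookeanStress K μ a`. -/
noncomputable def neoHookeanTangent (K μ a : ℝ) (C : Matrix n n ℝ) :
    Matrix n n ℝ →L[ℝ] Matrix n n ℝ :=
  volumetricTangent K C + isochoricTangent μ a C

theorem hasFDerivAt_volumetricStress (K : ℝ) (hC : C.det ≠ 0) :
    HasFDerivAt (volumetricStress K) ((1 / 2 : ℝ) • volumetricTangent K C) C := by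
  have h : HasFDerivAt (volumetricStress K)
      ((K / 2 * Real.log C.det) • -sandwich C⁻¹ + ((K / 2) • traceMul C⁻¹).smulRight C⁻¹) C :=
    ((hasFDerivAt_log_det hC).const_mul (K / 2)).smul (hasFDerivAt_matrix_inv hC)
  refine h.congr_fderiv ?_
  ext1 H
  simp only [volumetricTangent, add_apply, sub_apply, neg_apply, smul_apply, smul_eq_mul,
    ContinuousLinearMap.smulRight_apply, dyad_apply, sandwich_apply, traceMul_apply]
  module

theorem hasFDerivAt_isochoricStress (μ a : ℝ) (hC : C.det ≠ 0) :
    HasFDerivAt (isochoricStress μ a) ((1 / 2 : ℝ) • isochoricTangent μ a C) C := by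
  have hdev : HasFDerivAt (fun X : Matrix n n ℝ => 1 - (a * X.trace) • X⁻¹)
      (-((a * C.trace) • -sandwich C⁻¹ + (a • traceMul 1).smulRight C⁻¹)) C :=
    (((hasFDerivAt_trace C).const_mul a).smul (hasFDerivAt_matrix_inv hC)).const_sub 1
  have h : HasFDerivAt (isochoricStress μ a)
      ((μ * C.det ^ (-a)) • -((a * C.trace) • -sandwich C⁻¹ + (a • traceMul 1).smulRight C⁻¹) +
        (μ • (-a * C.det ^ (-a)) • traceMul C⁻¹).smulRight (1 - (a * C.trace) • C⁻¹)) C :=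
    ((hasFDerivAt_det_rpow (-a) hC).const_mul μ).smul hdev
  refine h.congr_fderiv ?_
  ext1 H
  simp only [isochoricTangent, add_apply, sub_apply, neg_apply, smul_apply, smul_eq_mul,
    ContinuousLinearMap.smulRight_apply, dyad_apply, sandwich_apply, traceMul_apply, one_mul]
  module

theorem stmt2_general (K μ a : ℝ) (hC : 0 < C.det) :
    HasFDerivAt (fun X => neoHookeanStress K μ a X)
      ((1 / 2 : ℝ) • neoHookeanTangent K μ a C) C := by
  simp only [neoHookeanStress_eq_add, neoHookeanTangent, smul_add]
  exact (hasFDerivAt_volumetricStress K hC.ne').add (hasFDerivAt_isochoricStress μ a hC.ne')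

end NeoHookean

/-- The material tangent of the compressible neo-Hookean second Piola–Kirchhoff stress:
for symmetric positive-definite `C` and symmetric `H`, the Fréchet derivative of
`S(C) = (K/2)(ln det C)C⁻¹ − (μ/3)(det C)^{-1/3}(tr C)C⁻¹ + μ(det C)^{-1/3}I` at `C`
applied to `H` equals `(1/2)𝔻 : H`. -/
theorem stmt2 (K μ : ℝ) (hK : 0 < K) (hμ : 0 < μ)
    (C H : Matrix (Fin 3) (Fin 3) ℝ) (hC : C.PosDef) (hH : H.IsSymm) :
    fderiv ℝ
      (fun X : Matrix (Fin 3) (Fin 3) ℝ =>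
        (K / 2 * Real.log X.det) • X⁻¹
          - (μ / 3 * X.det ^ (-(1 : ℝ) / 3) * X.trace) • X⁻¹
          + (μ * X.det ^ (-(1 : ℝ) / 3)) • (1 : Matrix (Fin 3) (Fin 3) ℝ)) C H =
      (1 / 2 : ℝ) •
        ((K * (C⁻¹ * H).trace) • C⁻¹
          - (K * Real.log C.det) • (C⁻¹ * H * C⁻¹)
          + (2 * μ / 3 * C.det ^ (-(1 : ℝ) / 3)) •
            (-(H.trace • C⁻¹) - ((C⁻¹ * H).trace • (1 : Matrix (Fin 3) (Fin 3) ℝ))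
              + (1 / 3 * C.trace * (C⁻¹ * H).trace) • C⁻¹
              + C.trace • (C⁻¹ * H * C⁻¹))) := by
  simpa only [neoHookeanStress, neoHookeanTangent, volumetricTangent, isochoricTangent, add_apply,
    sub_apply, neg_apply, smul_apply, smul_smul, dyad_apply, sandwich_apply, one_mul, mul_one_div,
    neg_div] using congr($((stmt2_general K μ (1 / 3) hC.det_pos).fderiv) H)
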